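/- arXiv:1412.1959 — 3 statements merged into one kernel-verified Lean document; each statement's English description precedes it below -/
import Mathlib

section
/- Let 0 ≤ δ ≤ 1 and define f : [0,∞) × [0,∞) → ℝ by f(x,y) = √(1+x²)·√(1+y²) − δ(x+y). Then the minimum of f over [0,∞) × [0,∞) equals 1 − δ²; that is, f(x,y) ≥ 1 − δ² for all x,y ≥ 0, and this value is attained (namely at (x,y) = (δ,δ)). -/
/-! The defect `(1 + x²)(1 + y²) - (1 - δ² + δ(x + y))²` is a combination, with weights `1 - δ²`
and `1`, of squares that vanish at `x = y = δ`. So for `|δ| ≤ 1` the graph of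
`√(1 + x²)·√(1 + y²)` lies above the plane `1 - δ² + δ(x + y)` and touches it at `(δ, δ)`. -/

theorem one_add_sq_mul_one_add_sq_eq {R : Type*} [CommRing R] (δ x y : R) :
    (1 + x ^ 2) * (1 + y ^ 2) =
      (1 - δ ^ 2 + δ * (x + y)) ^ 2 + (1 - δ ^ 2) * ((x - δ) ^ 2 + (y - δ) ^ 2) +
        (x * y - δ ^ 2) ^ 2 := by
  ring

theorem sq_le_one_add_sq_mul_one_add_sq {R : Type*} [CommRing R] [LinearOrder R]
    [IsStrictOrderedRing R] {δ : R} (hδ : |δ| ≤ 1) (x y : R) :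
    (1 - δ ^ 2 + δ * (x + y)) ^ 2 ≤ (1 + x ^ 2) * (1 + y ^ 2) := by
  have hcoeff : 0 ≤ 1 - δ ^ 2 := sub_nonneg.2 ((sq_le_one_iff_abs_le_one δ).2 hδ)
  rw [one_add_sq_mul_one_add_sq_eq δ x y, add_assoc]
  exact le_add_of_nonneg_right (by positivity)

theorem one_sub_sq_add_mul_le_sqrt_mul_sqrt {δ : ℝ} (hδ : |δ| ≤ 1) (x y : ℝ) :
    1 - δ ^ 2 + δ * (x + y) ≤ √(1 + x ^ 2) * √(1 + y ^ 2) := by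
  rw [← Real.sqrt_mul (by positivity)]
  exact Real.le_sqrt_of_sq_le (sq_le_one_add_sq_mul_one_add_sq hδ x y)

theorem stmt_0_general {δ : ℝ} (hδ : |δ| ≤ 1) {f : ℝ → ℝ → ℝ}
    (hf : ∀ x y : ℝ, f x y = √(1 + x ^ 2) * √(1 + y ^ 2) - δ * (x + y)) :
    (∀ x y : ℝ, 1 - δ ^ 2 ≤ f x y) ∧ f δ δ = 1 - δ ^ 2 := by
  constructor
  · intro x y
    rw [hf]
    exact le_sub_iff_add_le.2 (one_sub_sq_add_mul_le_sqrt_mul_sqrt hδ x y)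
  · rw [hf, Real.mul_self_sqrt (by positivity)]
    ring

/-- Lemma 2 of the paper: for `0 ≤ δ ≤ 1`, the function
`f(x,y) = √(1+x²)·√(1+y²) − δ(x+y)` on `[0,∞) × [0,∞)` has minimum `1 − δ²`,
attained at `(δ, δ)`. -/
theorem stmt_0 (δ : ℝ) (hδ0 : 0 ≤ δ) (hδ1 : δ ≤ 1)
    (f : ℝ → ℝ → ℝ)
    (hf : ∀ x y : ℝ, f x y =
      Real.sqrt (1 + x ^ 2) * Real.sqrt (1 + y ^ 2) - δ * (x + y)) :
    (∀ x y : ℝ, 0 ≤ x → 0 ≤ y → 1 - δ ^ 2 ≤ f x y) ∧ f δ δ = 1 - δ ^ 2 := by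
  obtain ⟨lower_bound, attained⟩ := stmt_0_general ((abs_of_nonneg hδ0).trans_le hδ1) hf
  exact ⟨fun x y _ _ ↦ lower_bound x y, attained⟩
end

section
/- Let E be a real normed vector space and R : E → E a bounded linear operator. Let M, C₁, C₂, C₃ ≥ 0, α > 0, Δt > 0, T > 0, and suppose ‖Rʲ‖ ≤ M for every integer j ≥ 0 (operator norm of the j-th iterate). Let n ≥ 1 be an integer with nΔt ≤ T, and let ξ₁, …, ξₙ, η₁, …, ηₙ ∈ E satisfy ‖ξ_j‖ ≤ C₁(Δt)^α for all 1 ≤ j ≤ n, ‖ξ_j − ξ_{j−1}‖ ≤ C₂(Δt)^{α+1} for all 2 ≤ j ≤ n, and ‖η_j‖ ≤ C₃(Δt)^{α+1} for all 1 ≤ j ≤ n. Define e₀ = 0 and e_j = R e_{j−1} + d_j for 1 ≤ j ≤ n, where d_j = (R − I)ξ_j + η_j and I is the identity operator. Then ‖e_n‖ ≤ ((M + 1)C₁ + M C₂ T + M C₃ T)·(Δt)^α. -/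
/-!
Summing `n ≈ T / Δt` errors of size `O(Δtᵅ)` loses a power of `Δt`, so `(R - I) ξ` cannot be
summed directly. Instead it is absorbed into the unknown: with `ζ j = ξ (j + 1)`, the shifted error
`e j + ζ j` again satisfies a recursion driven by `R`, with source
`(ζ (j + 1) - ζ j) + η (j + 1) = O(Δt ^ (α + 1))`. Variation of constants then gives a sum of
`n ≤ T / Δt` terms of that size, each amplified by at most `M`.
-/

section PowerBoundedRecurrence

variable {A E : Type*} [Monoid A] {R : A} {n : ℕ}

theorem eq_pow_smul_add_sum_of_recurrence [AddCommMonoid E] [DistribMulAction A E] {u f : ℕ → E}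
    (hu : ∀ j < n, u (j + 1) = R • u j + f j) :
    u n = R ^ n • u 0 + ∑ j ∈ Finset.range n, R ^ (n - 1 - j) • f j := by
  induction n with
  | zero => simp
  | succ n ih =>
    have shift_exponent : ∀ j ∈ Finset.range n,
        R • R ^ (n - 1 - j) • f j = R ^ (n - j) • f j := fun j hj ↦ by
      have exponent_succ : n - 1 - j + 1 = n - j := by
        have := Finset.mem_range.mp hj
        omega
      rw [smul_smul, ← pow_succ', exponent_succ]
    calc u (n + 1) = R • u n + f n := hu n n.lt_succ_self
      _ = R ^ (n + 1) • u 0 + (∑ j ∈ Finset.range n, R ^ (n - j) • f j + f n) := by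
        rw [ih fun j hj ↦ hu j (hj.trans n.lt_succ_self), smul_add, Finset.smul_sum,
          Finset.sum_congr rfl shift_exponent, smul_smul, ← pow_succ', add_assoc]
      _ = R ^ (n + 1) • u 0 + ∑ j ∈ Finset.range (n + 1), R ^ (n + 1 - 1 - j) • f j := by
        simp [Finset.sum_range_succ]

variable [SeminormedAddCommGroup E] [DistribMulAction A E] {M : ℝ}

theorem norm_le_mul_add_sum_norm_of_recurrence {u f : ℕ → E}
    (hR : ∀ (k : ℕ) (x : E), ‖R ^ k • x‖ ≤ M * ‖x‖)
    (hu : ∀ j < n, u (j + 1) = R • u j + f j) :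
    ‖u n‖ ≤ M * (‖u 0‖ + ∑ j ∈ Finset.range n, ‖f j‖) := by
  rw [eq_pow_smul_add_sum_of_recurrence hu, mul_add, Finset.mul_sum]
  exact norm_add_le_of_le (hR n _) (norm_sum_le_of_le _ fun j _ ↦ hR _ _)

theorem norm_le_of_smul_sub_add_recurrence {e ζ η : ℕ → E} {a b c : ℝ} (hM : 0 ≤ M)
    (hR : ∀ (k : ℕ) (x : E), ‖R ^ k • x‖ ≤ M * ‖x‖)
    (he : ∀ j < n, e (j + 1) = R • e j + (R • ζ j - ζ j + η j))
    (hζ_first : ‖ζ 0‖ ≤ a) (hζ_last : ‖ζ n‖ ≤ a)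
    (hζdiff : ∀ j < n, ‖ζ (j + 1) - ζ j‖ ≤ b) (hη : ∀ j < n, ‖η j‖ ≤ c) :
    ‖e n‖ ≤ M * ‖e 0‖ + (M + 1) * a + M * (n * (b + c)) := by
  have shifted_recurrence : ∀ j < n,
      e (j + 1) + ζ (j + 1) = R • (e j + ζ j) + (ζ (j + 1) - ζ j + η j) := fun j hj ↦ by
    rw [he j hj, smul_add]
    abel
  have source_le : ∑ j ∈ Finset.range n, ‖ζ (j + 1) - ζ j + η j‖ ≤ n * (b + c) := by
    refine (Finset.sum_le_card_nsmul _ _ (b + c) fun j hj ↦ ?_).trans_eq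
      (by rw [Finset.card_range, nsmul_eq_mul])
    have hjn : j < n := Finset.mem_range.mp hj
    exact norm_add_le_of_le (hζdiff j hjn) (hη j hjn)
  have initial_le : ‖e 0 + ζ 0‖ ≤ ‖e 0‖ + a := norm_add_le_of_le le_rfl hζ_first
  calc ‖e n‖ = ‖(e n + ζ n) - ζ n‖ := by rw [add_sub_cancel_right]
    _ ≤ ‖e n + ζ n‖ + ‖ζ n‖ := norm_sub_le _ _
    _ ≤ M * (‖e 0‖ + a + n * (b + c)) + a := by
      gcongr
      exact (norm_le_mul_add_sum_norm_of_recurrence (u := fun j ↦ e j + ζ j) hR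
        shifted_recurrence).trans (by gcongr)
    _ = M * ‖e 0‖ + (M + 1) * a + M * (n * (b + c)) := by ring

end PowerBoundedRecurrence

theorem stmt_15_general {A E : Type*} [Monoid A] [SeminormedAddCommGroup E]
    [DistribMulAction A E] {R : A} {M C₁ C₂ C₃ α Δt T : ℝ} (hM : 0 ≤ M) (hC₂ : 0 ≤ C₂)
    (hC₃ : 0 ≤ C₃) (hΔt : 0 < Δt) (hstab : ∀ (k : ℕ) (x : E), ‖R ^ k • x‖ ≤ M * ‖x‖)
    {n : ℕ} (hn : 1 ≤ n) (hnT : n * Δt ≤ T) {ξ η e : ℕ → E}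
    (hξ : ∀ j, 1 ≤ j → j ≤ n → ‖ξ j‖ ≤ C₁ * Δt ^ α)
    (hξdiff : ∀ j, 2 ≤ j → j ≤ n → ‖ξ j - ξ (j - 1)‖ ≤ C₂ * Δt ^ (α + 1))
    (hη : ∀ j, 1 ≤ j → j ≤ n → ‖η j‖ ≤ C₃ * Δt ^ (α + 1)) (he0 : e 0 = 0)
    (herec : ∀ j, 1 ≤ j → j ≤ n → e j = R • e (j - 1) + (R • ξ j - ξ j + η j)) :
    ‖e n‖ ≤ ((M + 1) * C₁ + M * C₂ * T + M * C₃ * T) * Δt ^ α := by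
  -- No bound on `ξ (n + 1)` is known: freezing `ξ` after index `n` kills the last difference.
  let ζ : ℕ → E := fun j ↦ ξ (min (j + 1) n)
  have ζ_of_lt : ∀ j < n, ζ j = ξ (j + 1) := fun j hj ↦ congrArg ξ (min_eq_left hj)
  have ζ_last : ζ n = ξ n := congrArg ξ (min_eq_right n.le_succ)
  have hζdiff : ∀ j < n, ‖ζ (j + 1) - ζ j‖ ≤ C₂ * Δt ^ (α + 1) := fun j hj ↦ by
    rcases (Nat.succ_le_of_lt hj).lt_or_eq with hlt | rfl
    · rw [ζ_of_lt _ hlt, ζ_of_lt j hj]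
      exact hξdiff (j + 2) (by omega) hlt
    · rw [ζ_last, ζ_of_lt j hj, sub_self, norm_zero]
      positivity
  have accumulated_error := norm_le_of_smul_sub_add_recurrence (ζ := ζ) (η := fun j ↦ η (j + 1))
    hM hstab (fun j hj ↦ ζ_of_lt j hj ▸ herec (j + 1) j.succ_pos hj)
    (ζ_of_lt 0 hn ▸ hξ 1 le_rfl hn) (ζ_last ▸ hξ n hn le_rfl) hζdiff
    (fun j hj ↦ hη (j + 1) j.succ_pos hj)
  calc ‖e n‖
    _ ≤ (M + 1) * (C₁ * Δt ^ α) + M * (n * (C₂ * Δt ^ (α + 1) + C₃ * Δt ^ (α + 1))) := by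
      simpa only [he0, norm_zero, mul_zero, zero_add] using accumulated_error
    _ = ((M + 1) * C₁ + M * (C₂ + C₃) * (n * Δt)) * Δt ^ α := by
      rw [Real.rpow_add_one hΔt.ne']
      ring
    _ ≤ ((M + 1) * C₁ + M * (C₂ + C₃) * T) * Δt ^ α := by gcongr
    _ = ((M + 1) * C₁ + M * C₂ * T + M * C₃ * T) * Δt ^ α := by ring

/-- Explicit-constant form of Lemma 1 of the paper (Hundsdorfer's lemma):
stability `‖Rʲ‖ ≤ M` plus the local-error decomposition `d_j = (R−I)ξ_j + η_j`
with `‖ξ_j‖ ≤ C₁Δtᵅ`, `‖ξ_j − ξ_{j−1}‖ ≤ C₂Δt^{α+1}`, `‖η_j‖ ≤ C₃Δt^{α+1}`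
yields `‖e_n‖ ≤ ((M+1)C₁ + MC₂T + MC₃T)Δtᵅ` for `nΔt ≤ T`. -/
theorem stmt_15 (E : Type*) [NormedAddCommGroup E] [NormedSpace ℝ E]
    (R : E →L[ℝ] E) (M C₁ C₂ C₃ : ℝ) (hM : 0 ≤ M) (hC₁ : 0 ≤ C₁) (hC₂ : 0 ≤ C₂)
    (hC₃ : 0 ≤ C₃) (α Δt T : ℝ) (hα : 0 < α) (hΔt : 0 < Δt) (hT : 0 < T)
    (hstab : ∀ j : ℕ, ‖R ^ j‖ ≤ M)
    (n : ℕ) (hn : 1 ≤ n) (hnT : n * Δt ≤ T)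
    (ξ η : ℕ → E)
    (hξ : ∀ j, 1 ≤ j → j ≤ n → ‖ξ j‖ ≤ C₁ * Δt ^ α)
    (hξdiff : ∀ j, 2 ≤ j → j ≤ n → ‖ξ j - ξ (j - 1)‖ ≤ C₂ * Δt ^ (α + 1))
    (hη : ∀ j, 1 ≤ j → j ≤ n → ‖η j‖ ≤ C₃ * Δt ^ (α + 1))
    (e : ℕ → E) (he0 : e 0 = 0)
    (herec : ∀ j, 1 ≤ j → j ≤ n →
      e j = R (e (j - 1)) + ((R - 1) (ξ j) + η j)) :
    ‖e n‖ ≤ ((M + 1) * C₁ + M * C₂ * T + M * C₃ * T) * Δt ^ α := by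
  exact stmt_15_general (R := R) hM hC₂ hC₃ hΔt (fun k ↦ (R ^ k).le_of_opNorm_le (hstab k)) hn hnT
    hξ hξdiff hη he0 herec
end

section
/- Let A₀, A₁, A₂ be m×m real matrices, Δt > 0 and θ a real number, and set Z_j = Δt·A_j (j = 0,1,2), Z = Z₀ + Z₁ + Z₂, Q_j = I − θZ_j (j = 1,2), and P = Q₁Q₂; assume Q₁ and Q₂ are invertible. Let u, u* ∈ ℝᵐ, let b₀, b₁, b₂, c₀, c₁, c₂ ∈ ℝᵐ (inhomogeneous source terms), and let ρ₀, ρ₁, ρ₂, ρ̂₀, ρ̃₀, ρ̃₁, ρ̃₂ ∈ ℝᵐ (perturbations). Suppose the vectors Y₀, Y₁, Y₂, Ŷ₀, Ỹ₀, Ỹ₁, Ỹ₂, v ∈ ℝᵐ satisfy Y₀ = u + Zu + Δt·b where b = b₀+b₁+b₂; Y_j = Y_{j−1} + θ(Z_jY_j + Δt·c_j − Z_ju − Δt·b_j) for j = 1,2; Ŷ₀ = Y₀ + θ(Z₀Y₂ + Δt·c₀ − Z₀u − Δt·b₀); Ỹ₀ = Ŷ₀ + (1/2 − θ)(ZY₂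 + Δt·c − Zu − Δt·b) where c = c₀+c₁+c₂; Ỹ_j = Ỹ_{j−1} + θ(Z_jỸ_j + Δt·c_j − Z_ju − Δt·b_j) for j = 1,2; and v = Ỹ₂; and suppose Y₀*, Y₁*, Y₂*, Ŷ₀*, Ỹ₀*, Ỹ₁*, Ỹ₂*, v* ∈ ℝᵐ satisfy the same equations with u replaced by u*, each equation augmented by adding the corresponding perturbation (ρ₀ to the first, ρ_j to the equations for Y_j*, ρ̂₀ to the equation for Ŷ₀*, ρ̃₀ to the equation for Ỹ₀*, ρ̃_j to the equations for Ỹ_j*), and v* = Ỹ₂*. Then v* − v = R(u* − u) + d, where R = I + P⁻¹Z + P⁻¹(θZ₀ + (1/2 − θ)Z)P⁻¹Z and d = P⁻¹(θZ₀ + (1/2 − θ)Z)(P⁻¹ρ₀ + Q₂⁻¹Q₁⁻¹ρ₁ + Q₂⁻¹ρ₂) + P⁻¹(ρ₀ + ρ̂₀ + ρ̃₀) + Q₂⁻¹Q₁⁻¹ρ̃₁ + Q₂⁻¹ρ̃₂. -/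
open Matrix

/-!
The errors of the stages satisfy the source-free scheme driven by the perturbations. Measured
relative to the initial error `u* - u`, an implicit stage acts on them by `Q = 1 - θZ`, so that
inverting the two implicit stages of a sweep produces `P⁻¹ = (Q₁Q₂)⁻¹`. The explicit correction
between the two sweeps adds `S = σZ₀ + μZ` applied to the outcome of the first sweep; substituting
the first sweep into the second gives `R` and `d`.
-/

namespace ModifiedCraigSneyd

variable {ι K : Type*} [Fintype ι] [CommRing K]

section Definitions

variable [DecidableEq ι]

/-- The stability matrix `R` of the modified Craig–Sneyd scheme, in terms of the factors `Q₁`, `Q₂`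
of the implicit stages, the matrix `S` of the explicit correction (`θZ₀ + (1/2 - θ)Z` in the paper)
and the matrix `Z` of the explicit predictor. -/
noncomputable def stabilityMatrix (Q₁ Q₂ S Z : Matrix ι ι K) : Matrix ι ι K :=
  1 + (Q₁ * Q₂)⁻¹ * Z + (Q₁ * Q₂)⁻¹ * S * (Q₁ * Q₂)⁻¹ * Z

/-- The local error `d` caused by the perturbations of the seven stages; the matrices are those of
`stabilityMatrix`, and `ρh`, `ρt` stand for `ρ̂`, `ρ̃`. -/
noncomputable def localError (Q₁ Q₂ S : Matrix ι ι K) (ρ₀ ρ₁ ρ₂ ρh₀ ρt₀ ρt₁ ρt₂ : ι → K) : ι → K :=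
  ((Q₁ * Q₂)⁻¹ * S) *ᵥ ((Q₁ * Q₂)⁻¹ *ᵥ ρ₀ + (Q₂⁻¹ * Q₁⁻¹) *ᵥ ρ₁ + Q₂⁻¹ *ᵥ ρ₂)
    + (Q₁ * Q₂)⁻¹ *ᵥ (ρ₀ + ρh₀ + ρt₀) + (Q₂⁻¹ * Q₁⁻¹) *ᵥ ρt₁ + Q₂⁻¹ *ᵥ ρt₂

end Definitions

section Stages

variable {Z Z₀ Z₁ Z₂ : Matrix ι ι K} {θ σ μ : K}
  {u us w ws x xs y ys b b₀ b₁ b₂ c c₀ c₁ c₂ ρ ρ₀ ρ₁ ρ₂ : ι → K}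

theorem predictor_error_sub (hx : x = u + Z *ᵥ u + b) (hxs : xs = us + Z *ᵥ us + b + ρ) :
    xs - x - (us - u) = Z *ᵥ (us - u) + ρ := by
  rw [hx, hxs, mulVec_sub]
  abel

-- Taking `w = x` gives an implicit stage, and `w` an earlier stage gives an explicit one.
theorem stage_error (hx : x = y + θ • (Z *ᵥ w + c - Z *ᵥ u - b))
    (hxs : xs = ys + θ • (Z *ᵥ ws + c - Z *ᵥ us - b) + ρ) :
    xs - x = ys - y + θ • Z *ᵥ (ws - w - (us - u)) + ρ := by
  rw [hx, hxs]
  simp only [mulVec_sub]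
  module

theorem correction_error {z zs : ι → K}
    (hx : x = y + σ • (Z₀ *ᵥ w + c₀ - Z₀ *ᵥ u - b₀))
    (hz : z = x + μ • (Z *ᵥ w + c - Z *ᵥ u - b))
    (hxs : xs = ys + σ • (Z₀ *ᵥ ws + c₀ - Z₀ *ᵥ us - b₀) + ρ₀)
    (hzs : zs = xs + μ • (Z *ᵥ ws + c - Z *ᵥ us - b) + ρ) :
    zs - z = ys - y + (σ • Z₀ + μ • Z) *ᵥ (ws - w - (us - u)) + ρ₀ + ρ := by
  rw [stage_error hz hzs, stage_error hx hxs, add_mulVec, smul_mulVec, smul_mulVec]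
  abel

variable [DecidableEq ι]

theorem eq_inv_mulVec_of_eq_add_smul_mulVec (hQ : IsUnit (1 - θ • Z))
    (hx : x = y + θ • Z *ᵥ x) : x = (1 - θ • Z)⁻¹ *ᵥ y := by
  have hy : (1 - θ • Z) *ᵥ x = y := by
    rw [sub_mulVec, one_mulVec, smul_mulVec]
    exact sub_eq_of_eq_add hx
  rw [← hy, mulVec_mulVec, nonsing_inv_mul _ ((isUnit_iff_isUnit_det _).1 hQ), one_mulVec]

theorem implicit_stage_error_sub (hQ : IsUnit (1 - θ • Z))
    (hx : x = y + θ • (Z *ᵥ x + c - Z *ᵥ u - b))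
    (hxs : xs = ys + θ • (Z *ᵥ xs + c - Z *ᵥ us - b) + ρ) :
    xs - x - (us - u) = (1 - θ • Z)⁻¹ *ᵥ (ys - y - (us - u) + ρ) := by
  apply eq_inv_mulVec_of_eq_add_smul_mulVec hQ
  nth_rw 1 [stage_error hx hxs]
  abel

theorem implicit_sweep_error_sub {x₁ xs₁ x₂ xs₂ : ι → K}
    (hQ₁ : IsUnit (1 - θ • Z₁)) (hQ₂ : IsUnit (1 - θ • Z₂))
    (hx₁ : x₁ = y + θ • (Z₁ *ᵥ x₁ + c₁ - Z₁ *ᵥ u - b₁))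
    (hx₂ : x₂ = x₁ + θ • (Z₂ *ᵥ x₂ + c₂ - Z₂ *ᵥ u - b₂))
    (hxs₁ : xs₁ = ys + θ • (Z₁ *ᵥ xs₁ + c₁ - Z₁ *ᵥ us - b₁) + ρ₁)
    (hxs₂ : xs₂ = xs₁ + θ • (Z₂ *ᵥ xs₂ + c₂ - Z₂ *ᵥ us - b₂) + ρ₂) :
    xs₂ - x₂ - (us - u) = ((1 - θ • Z₁) * (1 - θ • Z₂))⁻¹ *ᵥ (ys - y - (us - u))
      + ((1 - θ • Z₂)⁻¹ * (1 - θ • Z₁)⁻¹) *ᵥ ρ₁ + (1 - θ • Z₂)⁻¹ *ᵥ ρ₂ := by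
  rw [implicit_stage_error_sub hQ₂ hx₂ hxs₂, implicit_stage_error_sub hQ₁ hx₁ hxs₁,
    Matrix.mul_inv_rev]
  simp only [mulVec_add, mulVec_mulVec]

end Stages

end ModifiedCraigSneyd

open ModifiedCraigSneyd in
/-- The paper's scheme is `σ = θ`, `μ = 1/2 - θ`, `Z = Z₀ + Z₁ + Z₂`, with the factor `Δt` absorbed
into the sources. -/
theorem stmt_18_general {ι K : Type*} [Fintype ι] [DecidableEq ι] [CommRing K] {θ σ μ : K}
    {Z₀ Z₁ Z₂ Z : Matrix ι ι K} (hQ₁ : IsUnit (1 - θ • Z₁)) (hQ₂ : IsUnit (1 - θ • Z₂))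
    {u us b₀ b₁ b₂ b c₀ c₁ c₂ c ρ₀ ρ₁ ρ₂ ρh₀ ρt₀ ρt₁ ρt₂ : ι → K}
    {Y₀ Y₁ Y₂ Yh₀ Yt₀ Yt₁ Yt₂ Ys₀ Ys₁ Ys₂ Ysh₀ Yst₀ Yst₁ Yst₂ : ι → K}
    (hY₀ : Y₀ = u + Z *ᵥ u + b)
    (hY₁ : Y₁ = Y₀ + θ • (Z₁ *ᵥ Y₁ + c₁ - Z₁ *ᵥ u - b₁))
    (hY₂ : Y₂ = Y₁ + θ • (Z₂ *ᵥ Y₂ + c₂ - Z₂ *ᵥ u - b₂))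
    (hYh₀ : Yh₀ = Y₀ + σ • (Z₀ *ᵥ Y₂ + c₀ - Z₀ *ᵥ u - b₀))
    (hYt₀ : Yt₀ = Yh₀ + μ • (Z *ᵥ Y₂ + c - Z *ᵥ u - b))
    (hYt₁ : Yt₁ = Yt₀ + θ • (Z₁ *ᵥ Yt₁ + c₁ - Z₁ *ᵥ u - b₁))
    (hYt₂ : Yt₂ = Yt₁ + θ • (Z₂ *ᵥ Yt₂ + c₂ - Z₂ *ᵥ u - b₂))
    (hYs₀ : Ys₀ = us + Z *ᵥ us + b + ρ₀)
    (hYs₁ : Ys₁ = Ys₀ + θ • (Z₁ *ᵥ Ys₁ + c₁ - Z₁ *ᵥ us - b₁) + ρ₁)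
    (hYs₂ : Ys₂ = Ys₁ + θ • (Z₂ *ᵥ Ys₂ + c₂ - Z₂ *ᵥ us - b₂) + ρ₂)
    (hYsh₀ : Ysh₀ = Ys₀ + σ • (Z₀ *ᵥ Ys₂ + c₀ - Z₀ *ᵥ us - b₀) + ρh₀)
    (hYst₀ : Yst₀ = Ysh₀ + μ • (Z *ᵥ Ys₂ + c - Z *ᵥ us - b) + ρt₀)
    (hYst₁ : Yst₁ = Yst₀ + θ • (Z₁ *ᵥ Yst₁ + c₁ - Z₁ *ᵥ us - b₁) + ρt₁)
    (hYst₂ : Yst₂ = Yst₁ + θ • (Z₂ *ᵥ Yst₂ + c₂ - Z₂ *ᵥ us - b₂) + ρt₂) :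
    Yst₂ - Yt₂
      = stabilityMatrix (1 - θ • Z₁) (1 - θ • Z₂) (σ • Z₀ + μ • Z) Z *ᵥ (us - u)
        + localError (1 - θ • Z₁) (1 - θ • Z₂) (σ • Z₀ + μ • Z)
            ρ₀ ρ₁ ρ₂ ρh₀ ρt₀ ρt₁ ρt₂ := by
  have predictor := predictor_error_sub hY₀ hYs₀
  have first_sweep := implicit_sweep_error_sub hQ₁ hQ₂ hY₁ hY₂ hYs₁ hYs₂
  have correction := correction_error hYh₀ hYt₀ hYsh₀ hYst₀
  have second_sweep := implicit_sweep_error_sub hQ₁ hQ₂ hYt₁ hYt₂ hYst₁ hYst₂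
  rw [predictor] at first_sweep
  rw [eq_add_of_sub_eq predictor, first_sweep] at correction
  rw [eq_add_of_sub_eq second_sweep, correction, stabilityMatrix, localError]
  simp only [add_mulVec, mulVec_add, mulVec_sub, one_mulVec, mulVec_mulVec, mul_assoc]
  abel

/-- Error recursion of the Modified Craig–Sneyd scheme with `k = 2`
(eqs. (2.7)–(2.9) of the paper): one step of the MCS scheme applied to the
linear system `U' = AU + g(t)` with splitting `A = A₀ + A₁ + A₂`, together with
its perturbed version, satisfies `v* − v = R(u* − u) + d` where `R` is the MCS
stability matrix and `d` collects the perturbations. -/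
theorem stmt_18 (m : ℕ) (A₀ A₁ A₂ : Matrix (Fin m) (Fin m) ℝ) (Δt θ : ℝ)
    (hΔt : 0 < Δt)
    (Z₀ Z₁ Z₂ Z Q₁ Q₂ P : Matrix (Fin m) (Fin m) ℝ)
    (hZ₀ : Z₀ = Δt • A₀) (hZ₁ : Z₁ = Δt • A₁) (hZ₂ : Z₂ = Δt • A₂)
    (hZ : Z = Z₀ + Z₁ + Z₂)
    (hQ₁ : Q₁ = 1 - θ • Z₁) (hQ₂ : Q₂ = 1 - θ • Z₂) (hP : P = Q₁ * Q₂)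
    (hQ₁inv : IsUnit Q₁) (hQ₂inv : IsUnit Q₂)
    (u ustar b₀ b₁ b₂ c₀ c₁ c₂ b c : Fin m → ℝ)
    (ρ₀ ρ₁ ρ₂ ρh₀ ρt₀ ρt₁ ρt₂ : Fin m → ℝ)
    (hb : b = b₀ + b₁ + b₂) (hc : c = c₀ + c₁ + c₂)
    (Y₀ Y₁ Y₂ Yh₀ Yt₀ Yt₁ Yt₂ v : Fin m → ℝ)
    (hY₀ : Y₀ = u + Z.mulVec u + Δt • b)
    (hY₁ : Y₁ = Y₀ + θ • (Z₁.mulVec Y₁ + Δt • c₁ - Z₁.mulVec u - Δt • b₁))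
    (hY₂ : Y₂ = Y₁ + θ • (Z₂.mulVec Y₂ + Δt • c₂ - Z₂.mulVec u - Δt • b₂))
    (hYh₀ : Yh₀ = Y₀ + θ • (Z₀.mulVec Y₂ + Δt • c₀ - Z₀.mulVec u - Δt • b₀))
    (hYt₀ : Yt₀ = Yh₀ + (1 / 2 - θ) • (Z.mulVec Y₂ + Δt • c - Z.mulVec u - Δt • b))
    (hYt₁ : Yt₁ = Yt₀ + θ • (Z₁.mulVec Yt₁ + Δt • c₁ - Z₁.mulVec u - Δt • b₁))
    (hYt₂ : Yt₂ = Yt₁ + θ • (Z₂.mulVec Yt₂ + Δt • c₂ - Z₂.mulVec u - Δt • b₂))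
    (hv : v = Yt₂)
    (Ys₀ Ys₁ Ys₂ Ysh₀ Yst₀ Yst₁ Yst₂ vstar : Fin m → ℝ)
    (hYs₀ : Ys₀ = ustar + Z.mulVec ustar + Δt • b + ρ₀)
    (hYs₁ : Ys₁ = Ys₀ + θ • (Z₁.mulVec Ys₁ + Δt • c₁ - Z₁.mulVec ustar - Δt • b₁) + ρ₁)
    (hYs₂ : Ys₂ = Ys₁ + θ • (Z₂.mulVec Ys₂ + Δt • c₂ - Z₂.mulVec ustar - Δt • b₂) + ρ₂)
    (hYsh₀ : Ysh₀ = Ys₀ + θ • (Z₀.mulVec Ys₂ + Δt • c₀ - Z₀.mulVec ustar - Δt • b₀) + ρh₀)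
    (hYst₀ : Yst₀ = Ysh₀
        + (1 / 2 - θ) • (Z.mulVec Ys₂ + Δt • c - Z.mulVec ustar - Δt • b) + ρt₀)
    (hYst₁ : Yst₁ = Yst₀ + θ • (Z₁.mulVec Yst₁ + Δt • c₁ - Z₁.mulVec ustar - Δt • b₁) + ρt₁)
    (hYst₂ : Yst₂ = Yst₁ + θ • (Z₂.mulVec Yst₂ + Δt • c₂ - Z₂.mulVec ustar - Δt • b₂) + ρt₂)
    (hvstar : vstar = Yst₂)
    (R : Matrix (Fin m) (Fin m) ℝ)
    (hR : R = 1 + P⁻¹ * Z + P⁻¹ * (θ • Z₀ + (1 / 2 - θ) • Z) * P⁻¹ * Z)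
    (d : Fin m → ℝ)
    (hd : d = (P⁻¹ * (θ • Z₀ + (1 / 2 - θ) • Z)).mulVec
                (P⁻¹.mulVec ρ₀ + (Q₂⁻¹ * Q₁⁻¹).mulVec ρ₁ + Q₂⁻¹.mulVec ρ₂)
              + P⁻¹.mulVec (ρ₀ + ρh₀ + ρt₀)
              + (Q₂⁻¹ * Q₁⁻¹).mulVec ρt₁ + Q₂⁻¹.mulVec ρt₂) :
    vstar - v = R.mulVec (ustar - u) + d := by
  subst hQ₁ hQ₂ hP hR hd hv hvstar
  exact stmt_18_general hQ₁inv hQ₂inv hY₀ hY₁ hY₂ hYh₀ hYt₀ hYt₁ hYt₂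
    hYs₀ hYs₁ hYs₂ hYsh₀ hYst₀ hYst₁ hYst₂
end
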